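/- Let B be a noetherian normal integral domain graded by an abelian group G, and let H ∈ 𝕋(B). Then: (a) ht(J) = ht(J ∩ B^{(H)}) for every ideal J of B; (b) the map f : Spec B → Spec B^{(H)}, f(P) = P ∩ B^{(H)}, is surjective and satisfies f⁻¹(Spec¹ B^{(H)}) = Spec¹ B; (c) if G is torsion-free and Z (respectively Z') denotes the set of height-1 homogeneous prime ideals of B (respectively of B^{(H)}), then f⁻¹(Z') = Z and the restriction f|_Z : Z → Z' is bijective. -/

import Mathlib

noncomputable section

/-- A derivation is locally nilpotent. -/
def IsLND {R : Type*} [CommRing R] (D : Derivation ℤ R R) : Prop :=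
  ∀ b : R, ∃ n : ℕ, 0 < n ∧ (⇑D)^[n] b = 0

/-- Kernel of a derivation, as a subring. -/
def kerDer {R : Type*} [CommRing R] (D : Derivation ℤ R R) : Subring R where
  carrier := {x | D x = 0}
  one_mem' := by simp
  mul_mem' := by
    intro a b ha hb
    simp only [Set.mem_setOf_eq] at *
    rw [Derivation.leibniz, ha, hb]
    simp
  add_mem' := by
    intro a b ha hb
    simp only [Set.mem_setOf_eq] at *
    rw [map_add, ha, hb, add_zero]
  zero_mem' := by simp
  neg_mem' := by
    intro a ha
    simp only [Set.mem_setOf_eq] at *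
    rw [map_neg, ha, neg_zero]

section Graded

variable {G : Type*} [AddCommGroup G] {B : Type*} [CommRing B]

/-- The Veronese subring `B^{(H)} = ⊕_{i ∈ H} B_i` of a `G`-graded ring,
realized as the subring generated by the homogeneous elements whose degree lies in `H`. -/
def verSub (𝒜 : G → AddSubgroup B) (H : AddSubgroup G) : Subring B :=
  Subring.closure (⋃ i ∈ (H : Set G), (𝒜 i : Set B))

/-- 𝔾(B): the subgroup of G generated by the degrees of nonzero homogeneous elements. -/
def Gsub (𝒜 : G → AddSubgroup B) : AddSubgroup G :=
  AddSubgroup.closure { i : G | 𝒜 i ≠ ⊥ }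

/-- `H ∈ 𝕋(B)`: the quotient `𝔾(B)/(H ∩ 𝔾(B))` is torsion. -/
def Tmem (𝒜 : G → AddSubgroup B) (H : AddSubgroup G) : Prop :=
  ∀ g ∈ Gsub 𝒜, ∃ n : ℕ, 0 < n ∧ n • g ∈ H

/-- A homogeneous derivation of `B`. -/
def IsHomogDer (𝒜 : G → AddSubgroup B) (D : Derivation ℤ B B) : Prop :=
  ∃ d : G, ∀ (i : G) (x : B), x ∈ 𝒜 i → D x ∈ 𝒜 (i + d)

/-- A homogeneous derivation of a graded subring `S` of `B`. -/
def IsHomogDerOn (𝒜 : G → AddSubgroup B) (S : Subring B) (D : Derivation ℤ S S) : Prop :=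
  ∃ d : G, ∀ (i : G) (x : S), (x : B) ∈ 𝒜 i → ((D x : S) : B) ∈ 𝒜 (i + d)

/-- 𝕄̄(B,p): the subgroup of G generated by the degrees i with B_i ⊄ p. -/
def Mbar (𝒜 : G → AddSubgroup B) (p : Ideal B) : AddSubgroup G :=
  AddSubgroup.closure { i : G | ¬ (𝒜 i : Set B) ⊆ (p : Set B) }

/-- A prime ideal of height 1. -/
def heightOne {R : Type*} [CommRing R] (p : Ideal R) : Prop :=
  p.IsPrime ∧ (∃ q : Ideal R, q.IsPrime ∧ q < p) ∧
    ∀ q r : Ideal R, q.IsPrime → r.IsPrime → q < r → r < p → False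

open Classical in
/-- 𝔾̄(B). -/
def Gbar (𝒜 : G → AddSubgroup B) : AddSubgroup G :=
  if ∃ p : Ideal B, heightOne p then ⨅ p : {p : Ideal B // heightOne p}, Mbar 𝒜 p.1
  else Gsub 𝒜

end Graded

/-- The height of an ideal J: the infimum, over the primes p ⊇ J, of the height of p
(the height of a prime being the sup of the lengths of chains of primes ending at p). -/
noncomputable def idealHeight {R : Type*} [CommRing R] (J : Ideal R) : ℕ∞ :=
  ⨅ p : {p : Ideal R // p.IsPrime ∧ J ≤ p},
    Order.height (⟨p.1, p.2.1⟩ : {q : Ideal R // q.IsPrime})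

theorem aux_exists_order (G : Type*) [AddCommGroup G]
    (h : ∀ (g : G) (n : ℕ), 0 < n → n • g = 0 → g = 0) :
    ∃ _ : LinearOrder G, IsOrderedCancelAddMonoid G := by
  let f : G →ₗ[ℤ] TensorProduct ℤ ℚ G := TensorProduct.mk ℤ ℚ G 1
  have hf : Function.Injective f := by
    have : IsLocalizedModule (nonZeroDivisors ℤ) f :=
      (isLocalizedModule_iff_isBaseChange (nonZeroDivisors ℤ) ℚ f).mpr
        (TensorProduct.isBaseChange ℤ G ℚ)
    rw [injective_iff_map_eq_zero]
    intro g hg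
    rw [IsLocalizedModule.eq_zero_iff (nonZeroDivisors ℤ) f] at hg
    obtain ⟨⟨c, hc⟩, hcg⟩ := hg
    have hc0 : c ≠ 0 := nonZeroDivisors.ne_zero hc
    have hcg' : c • g = 0 := hcg
    refine h g c.natAbs (Int.natAbs_pos.mpr hc0) ?_
    rw [← natCast_zsmul]
    rcases Int.natAbs_eq c with h1 | h1
    · rw [← h1]; exact hcg'
    · have : ((c.natAbs : ℕ) : ℤ) = -c := by omega
      rw [this, neg_smul, hcg', neg_zero]
  let b := Module.Basis.ofVectorSpace ℚ (TensorProduct ℤ ℚ G)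
  classical
  letI : LinearOrder (Module.Basis.ofVectorSpaceIndex ℚ (TensorProduct ℤ ℚ G)) :=
    linearOrderOfSTO WellOrderingRel
  let φ : G → Lex (Module.Basis.ofVectorSpaceIndex ℚ (TensorProduct ℤ ℚ G) →₀ ℚ) :=
    fun g => toLex (b.repr (f g))
  have hφ : Function.Injective φ := fun x y hxy => hf (b.repr.injective (toLex.injective hxy))
  have hadd : ∀ x y, φ (x + y) = φ x + φ y := fun x y => by
    simp only [φ, map_add]; rfl
  letI lo : LinearOrder G := LinearOrder.lift' φ hφ
  have hle : ∀ x y : G, x ≤ y ↔ φ x ≤ φ y := fun x y => Iff.rfl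
  refine ⟨lo, ?_⟩
  have : IsOrderedAddMonoid G := by
    constructor
    · intro a b hab c
      rw [hle] at hab ⊢
      rw [hadd, hadd]
      exact add_le_add_left hab _
    · intro a b hab c
      rw [hle] at hab ⊢
      rw [hadd, hadd]
      exact add_le_add_right hab _
  exact IsOrderedAddMonoid.toIsOrderedCancelAddMonoid

section AuxGraded

variable {G : Type*} [AddCommGroup G] [DecidableEq G] {B : Type*} [CommRing B]
  (𝒜 : G → AddSubgroup B) [GradedRing 𝒜] (H : AddSubgroup G)

theorem aux_mul_support (T : Set G) (hT : ∀ h ∈ H, ∀ t, h + t ∈ T → t ∈ T)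
    {s : B} (hs : s ∈ verSub 𝒜 H) :
    ∀ y : B, (∀ i ∈ T, (DirectSum.decompose 𝒜 y i : B) = 0) →
      ∀ i ∈ T, (DirectSum.decompose 𝒜 (s * y) i : B) = 0 := by
  induction hs using Subring.closure_induction with
  | mem x hx =>
    intro y hy i hi
    simp only [Set.mem_iUnion] at hx
    obtain ⟨j, hj, hx⟩ := hx
    have h1 : i = j + (i - j) := by abel
    rw [h1, DirectSum.coe_decompose_mul_add_of_left_mem 𝒜 hx,
      hy (i - j) (hT j hj _ (by rwa [← h1])), mul_zero]
  | zero => intro y hy i hi; simp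
  | one => intro y hy i hi; simpa using hy i hi
  | add a b _ _ ha hb =>
    intro y hy i hi
    rw [add_mul, DirectSum.decompose_add, DirectSum.add_apply, AddSubgroup.coe_add,
      ha y hy i hi, hb y hy i hi, add_zero]
  | neg a _ ha =>
    intro y hy i hi
    have := ha y hy i hi
    rw [neg_mul, DirectSum.decompose_neg]
    change ((-(DirectSum.decompose 𝒜 (a * y) i) : 𝒜 i) : B) = 0
    rw [AddSubgroup.coe_neg, this, neg_zero]
  | mul a b _ _ ha hb =>
    intro y hy i hi
    rw [mul_assoc]
    exact ha _ (hb y hy) i hi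

theorem aux_hom_mem {i : G} (hi : i ∈ H) {x : B} (hx : x ∈ 𝒜 i) : x ∈ verSub 𝒜 H :=
  Subring.subset_closure (Set.mem_iUnion₂.mpr ⟨i, hi, hx⟩)

theorem aux_mem_iff (x : B) :
    x ∈ verSub 𝒜 H ↔ ∀ i, i ∉ H → (DirectSum.decompose 𝒜 x i : B) = 0 := by
  constructor
  · intro hx i hi
    have := aux_mul_support 𝒜 H {i | i ∉ H} (fun h hh t ht ht' => ht (H.add_mem hh ht')) hx 1
      (fun i hi => by
        have h0 : i ≠ 0 := fun h => hi (h ▸ H.zero_mem)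
        exact DirectSum.decompose_of_mem_ne 𝒜 (SetLike.GradedOne.one_mem) h0.symm) i hi
    simpa using this
  · intro h
    classical
    rw [← DirectSum.sum_support_decompose 𝒜 x]
    refine sum_mem fun i _ => ?_
    by_cases hi : i ∈ H
    · exact aux_hom_mem 𝒜 H hi (SetLike.coe_mem _)
    · rw [h i hi]; exact zero_mem _

theorem aux_comp_mem {x : B} (hx : x ∈ verSub 𝒜 H) (i : G) :
    (DirectSum.decompose 𝒜 x i : B) ∈ verSub 𝒜 H := by
  by_cases hi : i ∈ H
  · exact aux_hom_mem 𝒜 H hi (SetLike.coe_mem _)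
  · rw [(aux_mem_iff 𝒜 H x).mp hx i hi]; exact zero_mem _

theorem aux_div_mem [IsDomain B] {s x : B} (hs : s ∈ verSub 𝒜 H) (hs0 : s ≠ 0)
    (hsx : s * x ∈ verSub 𝒜 H) : x ∈ verSub 𝒜 H := by
  classical
  -- the part of `x` supported in `H`
  let x' : B := ∑ i ∈ (DirectSum.decompose 𝒜 x).support with i ∈ H,
    (DirectSum.decompose 𝒜 x i : B)
  have hx' : x' ∈ verSub 𝒜 H := sum_mem fun i hi =>
    aux_hom_mem 𝒜 H (Finset.mem_filter.mp hi).2 (SetLike.coe_mem _)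
  have hxx : x - x' = ∑ i ∈ (DirectSum.decompose 𝒜 x).support with i ∉ H,
      (DirectSum.decompose 𝒜 x i : B) := by
    rw [sub_eq_iff_eq_add', Finset.sum_filter_add_sum_filter_not,
      DirectSum.sum_support_decompose 𝒜 x]
  have hy : ∀ i ∈ (H : Set G), (DirectSum.decompose 𝒜 (x - x') i : B) = 0 := by
    intro i hi
    rw [hxx, DirectSum.decompose_sum, DFinsupp.finset_sum_apply, AddSubgroup.val_finset_sum]
    refine Finset.sum_eq_zero fun j hj => ?_
    have hji : j ≠ i := fun h => (Finset.mem_filter.mp hj).2 (h ▸ hi)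
    exact DirectSum.decompose_of_mem_ne 𝒜 (SetLike.coe_mem _) hji
  have h1 := aux_mul_support 𝒜 H (H : Set G)
    (fun h hh t ht => (H.add_mem_cancel_left hh).mp ht) hs _ hy
  have h2 : s * (x - x') ∈ verSub 𝒜 H := by
    rw [mul_sub]; exact sub_mem hsx (mul_mem hs hx')
  have h3 : s * (x - x') = 0 := by
    rw [← DirectSum.sum_support_decompose 𝒜 (s * (x - x'))]
    refine Finset.sum_eq_zero fun i _ => ?_
    by_cases hi : i ∈ H
    · exact h1 i hi
    · exact (aux_mem_iff 𝒜 H _).mp h2 i hi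
  have h4 : x = x' := by
    rcases mul_eq_zero.mp h3 with h | h
    · exact absurd h hs0
    · exact sub_eq_zero.mp h
  rw [h4]; exact hx'

theorem aux_pow_mem (hH : Tmem 𝒜 H) {i : G} {x : B} (hx : x ∈ 𝒜 i) :
    ∃ n : ℕ, 0 < n ∧ x ^ n ∈ verSub 𝒜 H := by
  by_cases h : 𝒜 i = ⊥
  · rw [h, AddSubgroup.mem_bot] at hx
    exact ⟨1, one_pos, by rw [hx]; simp [zero_mem]⟩
  · obtain ⟨n, hn, hni⟩ := hH i (AddSubgroup.subset_closure h)
    exact ⟨n, hn, aux_hom_mem 𝒜 H hni (SetLike.pow_mem_graded n hx)⟩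

theorem aux_integral (hH : Tmem 𝒜 H) : Algebra.IsIntegral (verSub 𝒜 H) B := by
  constructor
  intro x
  classical
  rw [← DirectSum.sum_support_decompose 𝒜 x]
  refine IsIntegral.sum _ fun i _ => ?_
  obtain ⟨n, hn, hm⟩ := aux_pow_mem 𝒜 H hH (SetLike.coe_mem (DirectSum.decompose 𝒜 x i))
  refine IsIntegral.of_pow hn ?_
  exact isIntegral_algebraMap (R := verSub 𝒜 H) (x := ⟨_, hm⟩)

theorem aux_intClosed [IsDomain B] [IsIntegrallyClosed B] :
    IsIntegrallyClosed (verSub 𝒜 H) := by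
  let K := FractionRing (verSub 𝒜 H)
  let L := FractionRing B
  have hinj : Function.Injective (algebraMap (verSub 𝒜 H) L) :=
    (IsFractionRing.injective B L).comp Subtype.val_injective
  let φ : K →ₐ[verSub 𝒜 H] L := IsFractionRing.liftAlgHom (g := Algebra.ofId (verSub 𝒜 H) L) hinj
  rw [isIntegrallyClosed_iff K]
  intro z hz
  have h1 : IsIntegral (verSub 𝒜 H) (φ z) := hz.map φ
  have h2 : IsIntegral B (φ z) := h1.tower_top
  obtain ⟨x, hx⟩ := IsIntegrallyClosed.isIntegral_iff.mp h2
  obtain ⟨a, s, hs, rfl⟩ := IsFractionRing.div_surjective (A := verSub 𝒜 H) z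
  have hs0 : (s : B) ≠ 0 := fun h => nonZeroDivisors.ne_zero hs (Subtype.ext h)
  have hsK : algebraMap (verSub 𝒜 H) K s ≠ 0 :=
    IsFractionRing.to_map_ne_zero_of_mem_nonZeroDivisors hs
  have h3 : (s : B) * x = a := by
    apply IsFractionRing.injective B L
    rw [map_mul, hx]
    have e1 : ∀ r : verSub 𝒜 H, algebraMap B L (r : B) = φ (algebraMap _ K r) := fun r => by
      rw [φ.commutes]; rfl
    rw [e1, e1, ← map_mul, mul_div_cancel₀ _ hsK]
  have h4 : x ∈ verSub 𝒜 H := aux_div_mem 𝒜 H s.2 hs0 (by rw [h3]; exact a.2)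
  refine ⟨⟨x, h4⟩, ?_⟩
  rw [eq_div_iff hsK, ← map_mul]
  congr 1
  apply Subtype.ext
  change x * (s : B) = a
  rw [mul_comm, h3]

theorem aux_homog_iff (P : Ideal B) :
    P = Ideal.span { x : B | x ∈ P ∧ ∃ i, x ∈ 𝒜 i } ↔ P.IsHomogeneous 𝒜 := by
  constructor
  · intro h
    rw [h]
    exact Ideal.homogeneous_span 𝒜 _ fun x hx => hx.2
  · intro h
    classical
    refine le_antisymm (fun x hx => ?_) (Ideal.span_le.mpr fun x hx => hx.1)
    rw [← DirectSum.sum_support_decompose 𝒜 x]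
    exact sum_mem fun i _ => Ideal.subset_span ⟨h i hx, i, SetLike.coe_mem _⟩

theorem aux_core_prime (hG : ∀ (g : G) (n : ℕ), 0 < n → n • g = 0 → g = 0)
    (P : Ideal B) (hP : P.IsPrime) :
    ∃ Q : Ideal B, Q.IsPrime ∧ Q.IsHomogeneous 𝒜 ∧ Q ≤ P ∧
      ∀ i, ∀ x ∈ 𝒜 i, x ∈ P → x ∈ Q := by
  obtain ⟨lo, ho⟩ := aux_exists_order G hG
  rename_i i1 i2 i3 i4
  have : i2 = lo.toDecidableEq := Subsingleton.elim _ _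
  subst this
  exact ⟨(P.homogeneousCore 𝒜).toIdeal, hP.homogeneousCore, HomogeneousIdeal.isHomogeneous _,
    Ideal.toIdeal_homogeneousCore_le 𝒜 P,
    fun i x hx hxP => Ideal.mem_homogeneousCore_of_homogeneous_of_mem ⟨i, hx⟩ hxP⟩

end AuxGraded

section AuxInt

variable {R S : Type*} [CommRing R] [CommRing S] [Algebra R S] [Algebra.IsIntegral R S]
  [Algebra.HasGoingDown R S]

theorem aux_down (P : Ideal S) (hP : P.IsPrime) (q : Ideal R) (hq : q.IsPrime)
    (h : q < P.comap (algebraMap R S)) :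
    ∃ Q : Ideal S, Q.IsPrime ∧ Q < P ∧ Q.comap (algebraMap R S) = q := by
  haveI : P.LiesOver (P.comap (algebraMap R S)) := ⟨rfl⟩
  haveI : (P.comap (algebraMap R S)).IsPrime := Ideal.comap_isPrime _ _
  obtain ⟨Q, h1, h2, h3⟩ := Ideal.exists_ideal_lt_liesOver_of_lt P h
  exact ⟨Q, h2, h1, h3.over.symm⟩

theorem aux_heightOne (P : Ideal S) (hP : P.IsPrime) :
    heightOne (P.comap (algebraMap R S)) ↔ heightOne P := by
  constructor
  · rintro ⟨_, ⟨q, hq, hqP⟩, h⟩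
    obtain ⟨Q, hQ, hQP, _⟩ := aux_down P hP q hq hqP
    refine ⟨hP, ⟨Q, hQ, hQP⟩, fun q r hq hr h1 h2 => ?_⟩
    exact h _ _ (Ideal.comap_isPrime (algebraMap R S) q) (Ideal.comap_isPrime (algebraMap R S) r)
      (Ideal.IsIntegral.comap_lt_comap h1) (Ideal.IsIntegral.comap_lt_comap h2)
  · rintro ⟨_, ⟨q, hq, hqP⟩, h⟩
    refine ⟨Ideal.comap_isPrime _ _, ⟨_, Ideal.comap_isPrime (algebraMap R S) q,
      Ideal.IsIntegral.comap_lt_comap hqP⟩, fun q r hq hr h1 h2 => ?_⟩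
    obtain ⟨R', hR', hRP, rfl⟩ := aux_down P hP r hr h2
    obtain ⟨Q', hQ', hQR, rfl⟩ := aux_down R' hR' q hq h1
    exact h Q' R' hQ' hR' hQR hRP

theorem aux_height (P : {q : Ideal S // q.IsPrime}) :
    Order.height (⟨P.1.comap (algebraMap R S), P.2.comap _⟩ :
      {q : Ideal R // q.IsPrime}) = Order.height P := by
  let f : {q : Ideal S // q.IsPrime} → {q : Ideal R // q.IsPrime} :=
    fun P => ⟨P.1.comap (algebraMap R S), P.2.comap _⟩
  have hf : StrictMono f := fun P Q h => by
    haveI := P.2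
    exact Ideal.IsIntegral.comap_lt_comap (R := R) (show P.1 < Q.1 from h)
  symm
  refine Order.coheight_eq_of_strictMono (α := ({q : Ideal S // q.IsPrime})ᵒᵈ)
    (β := ({q : Ideal R // q.IsPrime})ᵒᵈ) f (fun a b h => hf h) ?_ P
  intro P q hq
  obtain ⟨Q, h1, h2, h3⟩ := aux_down P.1 P.2 q.1 q.2 hq
  exact ⟨⟨Q, h1⟩, h2, Subtype.ext h3⟩

theorem aux_idealHeight (J : Ideal S) :
    idealHeight J = idealHeight (J.comap (algebraMap R S)) := by
  apply le_antisymm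
  · refine le_iInf fun p => ?_
    haveI := p.2.1
    obtain ⟨Q, h1, h2, h3⟩ := Ideal.exists_ideal_over_prime_of_isIntegral p.1 J p.2.2
    refine (iInf_le _ ⟨Q, h2, h1⟩).trans ?_
    rw [← aux_height (R := R) ⟨Q, h2⟩]
    exact le_of_eq (congrArg _ (Subtype.ext h3))
  · refine le_iInf fun P => ?_
    rw [← aux_height (R := R) ⟨P.1, P.2.1⟩]
    exact iInf_le (fun p : {p : Ideal R // p.IsPrime ∧ J.comap (algebraMap R S) ≤ p} =>
      Order.height (⟨p.1, p.2.1⟩ : {q : Ideal R // q.IsPrime}))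
      ⟨P.1.comap (algebraMap R S), P.2.1.comap _,
        Ideal.comap_mono P.2.2⟩

end AuxInt

/-- Let B be a noetherian normal domain graded by an abelian group G and H ∈ 𝕋(B).
Let f : Spec B → Spec B^{(H)} be P ↦ P ∩ B^{(H)}.  Then:
(a) ht(J) = ht(J ∩ B^{(H)}) for every ideal J of B;
(b) f is surjective and f⁻¹(Spec¹ B^{(H)}) = Spec¹ B;
(c) if G is torsion-free, then, with Z (resp. Z') the set of height-1 homogeneous
    primes of B (resp. of B^{(H)}), f⁻¹(Z') = Z and f|_Z : Z → Z' is bijective. -/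
theorem veronese_spec_map
    {G : Type*} [AddCommGroup G] [DecidableEq G]
    {B : Type*} [CommRing B] [IsDomain B] [IsNoetherianRing B] [IsIntegrallyClosed B]
    (𝒜 : G → AddSubgroup B) [GradedRing 𝒜]
    (H : AddSubgroup G) (hH : Tmem 𝒜 H) :
    (∀ J : Ideal B, idealHeight J = idealHeight (J.comap (verSub 𝒜 H).subtype)) ∧
    ((∀ q : Ideal (verSub 𝒜 H), q.IsPrime →
        ∃ P : Ideal B, P.IsPrime ∧ P.comap (verSub 𝒜 H).subtype = q) ∧
      (∀ P : Ideal B, P.IsPrime →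
        (heightOne (P.comap (verSub 𝒜 H).subtype) ↔ heightOne P))) ∧
    ((∀ (g : G) (n : ℕ), 0 < n → n • g = 0 → g = 0) →
      (∀ P : Ideal B, P.IsPrime →
        ((heightOne (P.comap (verSub 𝒜 H).subtype) ∧
          P.comap (verSub 𝒜 H).subtype
            = Ideal.span { x : (verSub 𝒜 H) | x ∈ P.comap (verSub 𝒜 H).subtype ∧
                ∃ i, (x : B) ∈ 𝒜 i }) ↔
          (heightOne P ∧ P = Ideal.span { x : B | x ∈ P ∧ ∃ i, x ∈ 𝒜 i }))) ∧
      (∀ P₁ P₂ : Ideal B,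
        (heightOne P₁ ∧ P₁ = Ideal.span { x : B | x ∈ P₁ ∧ ∃ i, x ∈ 𝒜 i }) →
        (heightOne P₂ ∧ P₂ = Ideal.span { x : B | x ∈ P₂ ∧ ∃ i, x ∈ 𝒜 i }) →
        P₁.comap (verSub 𝒜 H).subtype = P₂.comap (verSub 𝒜 H).subtype → P₁ = P₂) ∧
      (∀ q : Ideal (verSub 𝒜 H),
        (heightOne q ∧ q = Ideal.span { x : (verSub 𝒜 H) | x ∈ q ∧ ∃ i, (x : B) ∈ 𝒜 i }) →
        ∃ P : Ideal B,
          (heightOne P ∧ P = Ideal.span { x : B | x ∈ P ∧ ∃ i, x ∈ 𝒜 i }) ∧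
          P.comap (verSub 𝒜 H).subtype = q)) := by
  haveI hint := aux_integral 𝒜 H hH
  haveI hic := aux_intClosed 𝒜 H
  haveI hgd : Algebra.HasGoingDown (verSub 𝒜 H) B := inferInstance
  have hb1 : ∀ q : Ideal (verSub 𝒜 H), q.IsPrime →
        ∃ P : Ideal B, P.IsPrime ∧ P.comap (verSub 𝒜 H).subtype = q := by
    intro q hq
    obtain ⟨Q, _, h2, h3⟩ := Ideal.exists_ideal_over_prime_of_isIntegral q (⊥ : Ideal B)
      (by
        intro x hx
        have hx0 : x = 0 := Subtype.ext hx
        rw [hx0]; exact zero_mem _)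
    exact ⟨Q, h2, h3⟩
  have hb2 : ∀ P : Ideal B, P.IsPrime →
        (heightOne (P.comap (verSub 𝒜 H).subtype) ↔ heightOne P) :=
    fun P hP => aux_heightOne (R := verSub 𝒜 H) P hP
  refine ⟨fun J => aux_idealHeight (R := verSub 𝒜 H) J, ⟨hb1, hb2⟩, fun hG => ?_⟩
  have hc1 : ∀ P : Ideal B, P.IsPrime →
        ((heightOne (P.comap (verSub 𝒜 H).subtype) ∧
          P.comap (verSub 𝒜 H).subtype
            = Ideal.span { x : (verSub 𝒜 H) | x ∈ P.comap (verSub 𝒜 H).subtype ∧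
                ∃ i, (x : B) ∈ 𝒜 i }) ↔
          (heightOne P ∧ P = Ideal.span { x : B | x ∈ P ∧ ∃ i, x ∈ 𝒜 i })) := by
    intro P hP
    rw [hb2 P hP]
    refine and_congr_right fun hP1 => ?_
    rw [aux_homog_iff]
    constructor
    · intro h
      obtain ⟨Q, hQ, hQh, hQP, hQm⟩ := aux_core_prime 𝒜 hG P hP
      have hQ0 : Q ≠ ⊥ := by
        rintro rfl
        -- then the contraction of `P` is zero
        have hz : P.comap (verSub 𝒜 H).subtype = ⊥ := by
          rw [eq_bot_iff, h, Ideal.span_le]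
          rintro x ⟨hx, i, hi⟩
          exact Subtype.ext (hQm i _ hi hx)
        obtain ⟨-, ⟨q, hq, hqP⟩, -⟩ := (hb2 P hP).mpr hP1
        rw [hz] at hqP
        exact not_lt_bot hqP
      rcases hQP.lt_or_eq with hlt | heq
      · exact (hP1.2.2 ⊥ Q Ideal.isPrime_bot hQ (bot_lt_iff_ne_bot.mpr hQ0) hlt).elim
      · exact heq ▸ hQh
    · intro h
      classical
      refine le_antisymm (fun x hx => ?_) (Ideal.span_le.mpr fun x hx => hx.1)
      have hxs : x = ∑ i ∈ (DirectSum.decompose 𝒜 (x : B)).support,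
          (⟨_, aux_comp_mem 𝒜 H x.2 i⟩ : verSub 𝒜 H) := by
        apply Subtype.ext
        rw [AddSubmonoidClass.coe_finset_sum]
        exact (DirectSum.sum_support_decompose 𝒜 (x : B)).symm
      rw [hxs]
      exact sum_mem fun i _ => Ideal.subset_span ⟨h i hx, i, SetLike.coe_mem _⟩
  refine ⟨hc1, ?_, ?_⟩
  · have key : ∀ P₁ P₂ : Ideal B,
        (heightOne P₁ ∧ P₁ = Ideal.span { x : B | x ∈ P₁ ∧ ∃ i, x ∈ 𝒜 i }) →
        (heightOne P₂ ∧ P₂ = Ideal.span { x : B | x ∈ P₂ ∧ ∃ i, x ∈ 𝒜 i }) →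
        P₁.comap (verSub 𝒜 H).subtype = P₂.comap (verSub 𝒜 H).subtype → P₁ ≤ P₂ := by
      intro P₁ P₂ h1 h2 he
      rw [h1.2, Ideal.span_le]
      rintro x ⟨hx, i, hi⟩
      obtain ⟨n, hn, hm⟩ := aux_pow_mem 𝒜 H hH hi
      have h3 : (⟨x ^ n, hm⟩ : verSub 𝒜 H) ∈ P₁.comap (verSub 𝒜 H).subtype :=
        Ideal.pow_mem_of_mem P₁ hx n hn
      rw [he] at h3
      exact h2.1.1.mem_of_pow_mem n h3
    exact fun P₁ P₂ h1 h2 he => le_antisymm (key P₁ P₂ h1 h2 he) (key P₂ P₁ h2 h1 he.symm)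
  · intro q hq
    obtain ⟨P, hP, rfl⟩ := hb1 q hq.1.1
    exact ⟨P, (hc1 P hP).mp hq, rfl⟩
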